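/- Let F be a field of characteristic p, let q = p^k be a power of p, and let E ≥ 1, 1 ≤ D ≤ q − 2, and 1 ≤ d ≤ q be integers. Let T : F[y] → F[y] be an F-linear operator such that: (1) deg T(f) ≤ deg f − E for every nonzero f ∈ F[y]; (2) there exist c ∈ F and polynomials q_D, q_{D+1}, …, q_d ∈ F[y] with deg q_i ≤ i − D, such that with companion polynomial P = (X + c·y)^d + Σ_{i=D}^{d} q_i(y)·X^{d−i} (a polynomial of the shape (X+cy)^d plus terms of total degree ≤ d − D), the sequence {T(y^n)}_n satisfies the corresponding linear recurrence for all n ≥ d. Then for every f ∈ F[y] with deg f ≥ 1, N_T(f) ≤ ((q−D)(q−1)/(E·(q−D−1)))·(deg f)^{log(q−D)/log q}. -/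

import Mathlib

open Polynomial

/-- The nilpotence index of `f` with respect to `T`: the largest `k` with `T^k f ≠ 0`. -/
noncomputable def nilpIndex {R : Type} [CommRing R]
    (T : Module.End R (Polynomial R)) (f : Polynomial R) : ℕ :=
  sSup {k : ℕ | (T ^ k) f ≠ 0}

/-!
Call the content of `n` the number obtained by reading its base-`q` digits in base `q - D`. It is
subadditive and at most `n`, and it grows only like `n ^ (log (q - D) / log q)`. An operator that
lowers the content of every monomial by at least `E` therefore has nilpotence index at `f` at most
the maximal content of a monomial of `f`, divided by `E`.

That `T` lowers content by `E` is shown on `T (y ^ n)` by induction on `n`. Below `q` the content of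
`n` is `n`, and the given recurrence suffices. Multiplying the companion polynomial by
`(X + c y) ^ (q - d)` gives a recurrence of order `q`, whose companion polynomial is
`X ^ q + (c y) ^ q` plus terms of total degree at most `q - D`. As `y ^ q` has content `q - D`,
every term but `X ^ q` has content at most `q - D`. Raising this polynomial to the power `q ^ j`
keeps it sparse, by Frobenius, and turns the bound into `(q - D) ^ (j + 1)`, the content of
`q ^ (j + 1)`. Taking `j` with `q ^ (j + 1) ≤ n < q ^ (j + 2)` closes the induction, as adding
`q ^ (j + 1)` to `n - q ^ (j + 1)` involves no carry.
-/

section DigitContent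

variable {q r : ℕ}

/-- The content of `n`: the number obtained by reading the base-`q` digits of `n` in base `r`. -/
def digitContent (q r n : ℕ) : ℕ := Nat.ofDigits r (Nat.digits q n)

lemma digitContent_zero : digitContent q r 0 = 0 := by simp [digitContent]

lemma digitContent_of_lt {n : ℕ} (hn : n < q) : digitContent q r n = n := by
  rcases eq_or_ne n 0 with rfl | h0
  · exact digitContent_zero
  · rw [digitContent, Nat.digits_of_lt q n h0 hn, Nat.ofDigits_singleton]

lemma digitContent_eq_mod_add_div (hq : 1 < q) (n : ℕ) :
    digitContent q r n = n % q + r * digitContent q r (n / q) := by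
  rcases n.eq_zero_or_pos with rfl | hn
  · simp [digitContent_zero]
  · rw [digitContent, Nat.digits_def' hq hn, Nat.ofDigits_cons, digitContent]

lemma digitContent_eq_mod_pow_add_div_pow (hq : 1 < q) (j n : ℕ) :
    digitContent q r n = digitContent q r (n % q ^ j) + r ^ j * digitContent q r (n / q ^ j) := by
  induction j generalizing n with
  | zero => simp [Nat.mod_one, digitContent_zero]
  | succ j ih =>
    rw [digitContent_eq_mod_add_div hq n, digitContent_eq_mod_add_div hq (n % q ^ (j + 1)),
      ih (n / q), pow_succ', Nat.mod_mul_right_mod, Nat.mod_mul_right_div_self,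
      Nat.div_div_eq_div_mul]
    ring

lemma digitContent_mul_pow (hq : 1 < q) (b j : ℕ) :
    digitContent q r (b * q ^ j) = digitContent q r b * r ^ j := by
  rw [digitContent_eq_mod_pow_add_div_pow hq j, Nat.mul_mod_left, digitContent_zero, zero_add,
    Nat.mul_div_cancel _ (pow_pos (by omega) j), mul_comm]

lemma digitContent_add_pow (hq : 1 < q) {j m : ℕ} (h : m + q ^ j < q ^ (j + 1)) :
    digitContent q r (m + q ^ j) = digitContent q r m + r ^ j := by
  have hpos : 0 < q ^ j := pow_pos (by omega) j
  have hdiv : m / q ^ j + 1 < q := by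
    rw [← Nat.add_div_right m hpos]
    exact Nat.div_lt_of_lt_mul (by rwa [← pow_succ])
  rw [digitContent_eq_mod_pow_add_div_pow hq j, digitContent_eq_mod_pow_add_div_pow hq j m,
    Nat.add_mod_right, Nat.add_div_right m hpos, digitContent_of_lt hdiv,
    digitContent_of_lt (Nat.lt_of_succ_lt hdiv)]
  ring

lemma digitContent_add_le (hq : 1 < q) (hr : r ≤ q) (a b : ℕ) :
    digitContent q r (a + b) ≤ digitContent q r a + digitContent q r b := by
  induction h : a + b using Nat.strong_induction_on generalizing a b with
  | _ n ih =>
    subst h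
    rcases (a + b).eq_zero_or_pos with h0 | hpos
    · simp [h0, digitContent_zero]
    have hlt : a / q + b / q < a + b :=
      Nat.div_add_div_le_add_div.trans_lt (Nat.div_lt_self hpos hq)
    have hdiv := Nat.mul_le_mul_left r (ih _ hlt _ _ rfl)
    rw [digitContent_eq_mod_add_div hq (a + b), digitContent_eq_mod_add_div hq a,
      digitContent_eq_mod_add_div hq b, Nat.add_div (by omega)]
    split_ifs with hcarry
    · have hmod : (a + b) % q + q = a % q + b % q := Nat.add_mod_add_of_le_add_mod hcarry
      have hlt' : a / q + b / q + 1 < a + b := by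
        have ha := Nat.div_add_mod a q
        have hb := Nat.div_add_mod b q
        nlinarith [Nat.zero_le (a / q), Nat.zero_le (b / q), Nat.zero_le ((a + b) % q)]
      have hsucc := Nat.mul_le_mul_left r (ih _ hlt' _ 1 rfl)
      rw [digitContent_of_lt hq] at hsucc
      linarith
    · have hmod : (a + b) % q = a % q + b % q := Nat.add_mod_of_add_mod_lt (by omega)
      rw [add_zero]
      linarith

lemma digitContent_le_self (hq : 1 < q) (hr : r ≤ q) (n : ℕ) : digitContent q r n ≤ n := by
  induction n with
  | zero => exact digitContent_zero.le
  | succ n ih =>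
    have := digitContent_add_le hq hr n 1
    rw [digitContent_of_lt hq] at this
    exact this.trans (Nat.succ_le_succ ih)

lemma digitContent_le_geom_sum (hq : 1 < q) {j n : ℕ} (h : n < q ^ j) :
    digitContent q r n ≤ (q - 1) * ∑ i ∈ Finset.range j, r ^ i := by
  induction j generalizing n with
  | zero => simp [Nat.lt_one_iff.mp h, digitContent_zero]
  | succ j ih =>
    have hdiv : n / q < q ^ j := Nat.div_lt_of_lt_mul (by rwa [← pow_succ'])
    calc digitContent q r n = n % q + r * digitContent q r (n / q) :=
          digitContent_eq_mod_add_div hq n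
      _ ≤ (q - 1) + r * ((q - 1) * ∑ i ∈ Finset.range j, r ^ i) :=
          add_le_add (Nat.le_sub_one_of_lt (Nat.mod_lt n (by omega)))
            (Nat.mul_le_mul_left r (ih hdiv))
      _ = (q - 1) * ∑ i ∈ Finset.range (j + 1), r ^ i := by
          rw [geom_sum_succ]
          ring

lemma pow_log_le_rpow (hq : 1 < q) (hr : 1 ≤ r) {n : ℕ} (hn : n ≠ 0) :
    (r : ℝ) ^ Nat.log q n ≤ (n : ℝ) ^ (Real.log r / Real.log q) := by
  have hq' : (1 : ℝ) < q := mod_cast hq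
  have hr' : (1 : ℝ) ≤ r := mod_cast hr
  have hrpow : (q : ℝ) ^ (Real.log r / Real.log q) = r :=
    Real.rpow_logb (by linarith) hq'.ne' (by linarith)
  calc (r : ℝ) ^ Nat.log q n = ((q : ℝ) ^ Nat.log q n) ^ (Real.log r / Real.log q) := by
        rw [← Real.rpow_pow_comm (by linarith), hrpow]
    _ ≤ (n : ℝ) ^ (Real.log r / Real.log q) :=
        Real.rpow_le_rpow (by positivity) (mod_cast Nat.pow_log_le_self q hn)
          (div_nonneg (Real.log_nonneg hr') (Real.log_nonneg hq'.le))

lemma digitContent_le_rpow (hq : 1 < q) (hr : 1 < r) (n : ℕ) :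
    (digitContent q r n : ℝ) ≤ r * ((q - 1 : ℕ) : ℝ) / ((r - 1 : ℕ) : ℝ) *
      (n : ℝ) ^ (Real.log r / Real.log q) := by
  rcases eq_or_ne n 0 with rfl | hn
  · rw [digitContent_zero, Nat.cast_zero]
    positivity
  have hr' : (0 : ℝ) < ((r - 1 : ℕ) : ℝ) := mod_cast Nat.sub_pos_of_lt hr
  have hgeom : (r - 1) * digitContent q r n ≤ (q - 1) * r ^ (Nat.log q n + 1) :=
    calc (r - 1) * digitContent q r n
        ≤ (r - 1) * ((q - 1) * ∑ i ∈ Finset.range (Nat.log q n + 1), r ^ i) :=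
          Nat.mul_le_mul_left _ (digitContent_le_geom_sum hq (Nat.lt_pow_succ_log_self hq n))
      _ = (q - 1) * ((∑ i ∈ Finset.range (Nat.log q n + 1), r ^ i) * (r - 1)) := by ring
      _ ≤ (q - 1) * r ^ (Nat.log q n + 1) := by
          have := geom_sum_mul_add (r - 1) (Nat.log q n + 1)
          rw [Nat.sub_add_cancel hr.le] at this
          exact Nat.mul_le_mul_left _ (by omega)
  rw [div_mul_eq_mul_div, le_div_iff₀' hr']
  calc ((r - 1 : ℕ) : ℝ) * digitContent q r n ≤ ((q - 1 : ℕ) : ℝ) * (r : ℝ) ^ (Nat.log q n + 1) :=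
        mod_cast hgeom
    _ = r * ((q - 1 : ℕ) : ℝ) * (r : ℝ) ^ Nat.log q n := by ring
    _ ≤ r * ((q - 1 : ℕ) : ℝ) * (n : ℝ) ^ (Real.log r / Real.log q) := by
        gcongr
        exact pow_log_le_rpow hq hr.le hn

end DigitContent

section WeightFiltration

section Semiring

variable {R : Type*} [Semiring R] {u v w : ℕ → ℕ} {A B M N : ℕ}

/-- The polynomials spanned by the monomials `y ^ n` of weight `w n ≤ B`. -/
noncomputable def weightLE (R : Type*) [Semiring R] (w : ℕ → ℕ) (B : ℕ) : Submodule R R[X] :=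
  ⨅ n : ℕ, ⨅ _ : B < w n, LinearMap.ker (lcoeff R n)

lemma mem_weightLE {f : R[X]} : f ∈ weightLE R w B ↔ ∀ n, f.coeff n ≠ 0 → w n ≤ B := by
  simp only [weightLE, Submodule.mem_iInf, LinearMap.mem_ker, lcoeff_apply]
  exact forall_congr' fun n => by rw [← not_imp_not, not_lt]

lemma weightLE_mono (h : ∀ n, v n ≤ A → w n ≤ B) : weightLE R v A ≤ weightLE R w B :=
  fun _ hf => mem_weightLE.2 fun n hn => h n (mem_weightLE.1 hf n hn)

lemma C_mul_X_pow_mem_weightLE {n : ℕ} (h : w n ≤ B) (a : R) :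
    C a * X ^ n ∈ weightLE R w B := by
  refine mem_weightLE.2 fun m hm => ?_
  rw [coeff_C_mul_X_pow] at hm
  obtain rfl : m = n := by_contra fun hne => hm (if_neg hne)
  exact h

lemma one_mem_weightLE (h : w 0 ≤ B) : 1 ∈ weightLE R w B := by
  have h' := C_mul_X_pow_mem_weightLE h (1 : R)
  rwa [pow_zero, mul_one, C_1] at h'

lemma mul_mem_weightLE (h : ∀ a b, u (a + b) ≤ v a + w b) {f g : R[X]}
    (hf : f ∈ weightLE R v A) (hg : g ∈ weightLE R w B) : f * g ∈ weightLE R u (A + B) := by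
  refine mem_weightLE.2 fun n hn => ?_
  rw [coeff_mul] at hn
  obtain ⟨⟨a, b⟩, hab, hne⟩ := Finset.exists_ne_zero_of_sum_ne_zero hn
  rw [← Finset.HasAntidiagonal.mem_antidiagonal.1 hab]
  exact (h a b).trans (add_le_add (mem_weightLE.1 hf a (left_ne_zero_of_mul hne))
    (mem_weightLE.1 hg b (right_ne_zero_of_mul hne)))

lemma mem_weightLE_of_degree_add_le (hw : ∀ n, w n ≤ n) {E n : ℕ} {f : R[X]}
    (hf : f.degree + (E : WithBot ℕ) ≤ n) : f ∈ weightLE R (w · + E) n := by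
  refine mem_weightLE.2 fun m hm => (Nat.add_le_add_right (hw m) E).trans ?_
  exact_mod_cast (add_le_add_left (le_degree_of_ne_zero hm) (E : WithBot ℕ)).trans hf

/-- The bivariate polynomials spanned by the monomials `y ^ b * X ^ a` of weight `a + w b ≤ N`;
for `w = id` this is total degree at most `N`. -/
noncomputable def biweightLE (R : Type*) [Semiring R] (w : ℕ → ℕ) (N : ℕ) :
    AddSubmonoid R[X][X] where
  carrier := {G | ∀ a, G.coeff a ∈ weightLE R (a + w ·) N}
  zero_mem' _ := zero_mem _
  add_mem' hG hH a := by
    rw [coeff_add]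
    exact add_mem (hG a) (hH a)

lemma mem_biweightLE {G : R[X][X]} :
    G ∈ biweightLE R w N ↔ ∀ a, G.coeff a ∈ weightLE R (a + w ·) N :=
  Iff.rfl

lemma C_mul_X_pow_mem_biweightLE {f : R[X]} {a : ℕ} (hf : f ∈ weightLE R (a + w ·) N) :
    C f * X ^ a ∈ biweightLE R w N := by
  refine mem_biweightLE.2 fun b => ?_
  rw [coeff_C_mul_X_pow]
  split_ifs with h
  · rwa [h]
  · exact zero_mem _

lemma C_mem_biweightLE {f : R[X]} (hf : f ∈ weightLE R w N) : C f ∈ biweightLE R w N := by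
  have h := C_mul_X_pow_mem_biweightLE (a := 0)
    (weightLE_mono (fun _ hn => (zero_add _).trans_le hn) hf)
  rwa [pow_zero, mul_one] at h

lemma X_mem_biweightLE (hw : w 0 = 0) : (X : R[X][X]) ∈ biweightLE R w 1 := by
  have h := C_mul_X_pow_mem_biweightLE (one_mem_weightLE (R := R) (w := (1 + w ·)) (B := 1)
    (by rw [hw]))
  rwa [C_1, one_mul, pow_one] at h

lemma biweightLE_mono (h : ∀ a b, a + v b ≤ M → a + w b ≤ N) :
    biweightLE R v M ≤ biweightLE R w N :=
  fun _ hG => mem_biweightLE.2 fun a => weightLE_mono (h a) (mem_biweightLE.1 hG a)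

lemma mul_mem_biweightLE (h : ∀ a b, u (a + b) ≤ v a + w b) {G H : R[X][X]}
    (hG : G ∈ biweightLE R v M) (hH : H ∈ biweightLE R w N) :
    G * H ∈ biweightLE R u (M + N) := by
  refine mem_biweightLE.2 fun n => ?_
  rw [coeff_mul]
  refine sum_mem fun ij hij => ?_
  refine mul_mem_weightLE (fun a b => ?_) (mem_biweightLE.1 hG ij.1) (mem_biweightLE.1 hH ij.2)
  rw [← Finset.HasAntidiagonal.mem_antidiagonal.1 hij, add_add_add_comm]
  exact Nat.add_le_add_left (h a b) _

lemma pow_mem_biweightLE (hw : ∀ a b, w (a + b) ≤ w a + w b) (hw₀ : w 0 = 0) {G : R[X][X]}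
    (hG : G ∈ biweightLE R w N) (n : ℕ) : G ^ n ∈ biweightLE R w (n * N) := by
  induction n with
  | zero =>
    rw [pow_zero, ← C_1]
    exact C_mem_biweightLE (one_mem_weightLE (hw₀.trans_le (Nat.zero_le _)))
  | succ n ih =>
    rw [pow_succ, add_one_mul]
    exact mul_mem_biweightLE hw ih hG

lemma degree_le_of_mem_biweightLE {G : R[X][X]} (hG : G ∈ biweightLE R w N) : G.degree ≤ N := by
  refine (degree_le_iff_coeff_zero _ _).2 fun a ha => by_contra fun hne => ?_
  have haN : a + w _ ≤ N :=
    mem_weightLE.1 (mem_biweightLE.1 hG a) _ (leadingCoeff_ne_zero.2 hne)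
  exact (Nat.le_of_add_right_le haN).not_gt (mod_cast ha)

end Semiring

section Frobenius

variable {R : Type*} [CommSemiring R] (p : ℕ) [ExpChar R p] {v w : ℕ → ℕ} {A B : ℕ}

lemma pow_expChar_pow_eq_sum (n : ℕ) (f : R[X]) :
    f ^ p ^ n = ∑ a ∈ f.support, C (f.coeff a ^ p ^ n) * X ^ (a * p ^ n) := by
  conv_lhs => rw [f.as_sum_support_C_mul_X_pow]
  simp only [sum_pow_char_pow, mul_pow, C_pow, pow_mul]

lemma pow_expChar_pow_mem_weightLE {n : ℕ} (h : ∀ b, v b ≤ A → w (b * p ^ n) ≤ B) {f : R[X]}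
    (hf : f ∈ weightLE R v A) : f ^ p ^ n ∈ weightLE R w B := by
  rw [pow_expChar_pow_eq_sum p]
  exact sum_mem fun b hb =>
    C_mul_X_pow_mem_weightLE (h b (mem_weightLE.1 hf b (mem_support_iff.1 hb))) _

end Frobenius

end WeightFiltration

section Shift

variable {A : Type*} [CommSemiring A]

/-- The shift operator on sequences. The sequence `s` satisfies the linear recurrence with companion
polynomial `P` exactly when `aeval (shift A) P s = 0`. -/
def shift (A : Type*) [CommSemiring A] : Module.End A (ℕ → A) := LinearMap.funLeft A A Nat.succ

lemma shift_pow_apply (n : ℕ) (s : ℕ → A) (m : ℕ) : (shift A ^ n) s m = s (m + n) := by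
  induction n generalizing m with
  | zero => rfl
  | succ n ih =>
    rw [pow_succ', Module.End.mul_apply, shift, LinearMap.funLeft_apply, ← shift, ih]
    congr 1
    omega

lemma aeval_shift_C_mul_X_pow (a : A) (n : ℕ) (s : ℕ → A) (m : ℕ) :
    aeval (shift A) (C a * X ^ n : A[X]) s m = a * s (m + n) := by
  rw [map_mul, map_pow, aeval_C, aeval_X, Module.End.mul_apply, Module.algebraMap_end_apply,
    Pi.smul_apply, shift_pow_apply, smul_eq_mul]

lemma aeval_shift_X_pow (n : ℕ) (s : ℕ → A) (m : ℕ) :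
    aeval (shift A) (X ^ n : A[X]) s m = s (m + n) := by
  simpa using aeval_shift_C_mul_X_pow 1 n s m

lemma aeval_shift_pow_expChar_pow (p : ℕ) [ExpChar A p] (n : ℕ) (G : A[X]) (s : ℕ → A) (m : ℕ) :
    aeval (shift A) (G ^ p ^ n) s m =
      ∑ a ∈ G.support, G.coeff a ^ p ^ n * s (m + a * p ^ n) := by
  rw [pow_expChar_pow_eq_sum p, map_sum, LinearMap.sum_apply, Finset.sum_apply]
  exact Finset.sum_congr rfl fun a _ => aeval_shift_C_mul_X_pow _ _ s m

end Shift

section Companion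

variable {A : Type*} [CommRing A]

/-- The lower-order part of the companion polynomial
`X ^ d + a 1 * X ^ (d - 1) + ⋯ + a d` of a linear recurrence of order `d`. -/
noncomputable def companionTail (d : ℕ) (a : ℕ → A) : A[X] :=
  ∑ i ∈ Finset.Icc 1 d, C (a i) * X ^ (d - i)

lemma companionTail_add (d : ℕ) (a b : ℕ → A) :
    companionTail d (fun i => a i + b i) = companionTail d a + companionTail d b := by
  simp only [companionTail, C_add, add_mul, Finset.sum_add_distrib]

lemma degree_companionTail_lt (d : ℕ) (a : ℕ → A) : (companionTail d a).degree < d := by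
  refine mem_degreeLT.1 (sum_mem fun i hi => mem_degreeLT.2 ?_)
  rw [Finset.mem_Icc] at hi
  exact (degree_C_mul_X_pow_le _ _).trans_lt (mod_cast (by omega : d - i < d))

lemma X_pow_add_companionTail_choose (d : ℕ) (z : A) :
    X ^ d + companionTail d (fun i => d.choose i * z ^ i) = (X + C z) ^ d := by
  rw [add_comm X, add_pow, Finset.range_eq_Ico, Finset.sum_eq_sum_Ico_succ_bot (by omega),
    companionTail]
  simp only [pow_zero, one_mul, Nat.sub_zero, Nat.choose_zero_right, Nat.cast_one, mul_one]
  refine congrArg _ (Finset.sum_congr rfl fun i _ => ?_)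
  rw [C_mul, C_pow, map_natCast]
  ring

lemma aeval_shift_companion_eq_zero {d : ℕ} {a s : ℕ → A}
    (h : ∀ n, d ≤ n → s n = -∑ i ∈ Finset.Icc 1 d, a i * s (n - i)) :
    aeval (shift A) (X ^ d + companionTail d a) s = 0 := by
  ext m
  rw [map_add, companionTail, map_sum, LinearMap.add_apply, LinearMap.sum_apply, Pi.add_apply,
    Finset.sum_apply, aeval_shift_X_pow, h _ (Nat.le_add_left d m), Pi.zero_apply,
    neg_add_eq_zero]
  refine Finset.sum_congr rfl fun i hi => ?_
  rw [aeval_shift_C_mul_X_pow, Nat.add_sub_assoc (Finset.mem_Icc.1 hi).2]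

end Companion

section Descent

variable {R : Type*} [CommRing R] {w : ℕ → ℕ}

lemma companionTail_mem_biweightLE {d : ℕ} {a : ℕ → R[X]}
    (h : ∀ i ∈ Finset.Icc 1 d, a i ∈ weightLE R w i) :
    companionTail d a ∈ biweightLE R w d := by
  refine sum_mem fun i hi => C_mul_X_pow_mem_biweightLE (weightLE_mono (fun n hn => ?_) (h i hi))
  rw [Finset.mem_Icc] at hi
  omega

/-- The recurrence coefficients of a companion polynomial `(X + c y) ^ d + ⋯` whose remaining part
has coefficient `b i` at `X ^ (d - i)`. -/
noncomputable def perturbedCoeff (c : R) (d : ℕ) (b : ℕ → R[X]) (i : ℕ) : R[X] :=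
  C ((d.choose i : R) * c ^ i) * X ^ i + b i

lemma X_pow_add_companionTail_perturbedCoeff (c : R) (d : ℕ) (b : ℕ → R[X]) :
    X ^ d + companionTail d (perturbedCoeff c d b) =
      (X + C (C c * X)) ^ d + companionTail d b := by
  have hcoeff : perturbedCoeff c d b = fun i => (d.choose i : R[X]) * (C c * X) ^ i + b i := by
    funext i
    rw [perturbedCoeff, C_mul, map_natCast, C_pow, mul_assoc, mul_pow]
  rw [hcoeff, companionTail_add, ← add_assoc, X_pow_add_companionTail_choose]

lemma perturbedCoeff_mem_weightLE (hw : ∀ n, w n ≤ n) (c : R) (d : ℕ) {D i : ℕ} {b : ℕ → R[X]}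
    (hb : b i ∈ weightLE R (w · + D) i) : perturbedCoeff c d b i ∈ weightLE R w i :=
  add_mem (C_mul_X_pow_mem_weightLE (hw i) _)
    (weightLE_mono (fun _ h => (Nat.le_add_right _ D).trans h) hb)

lemma exists_mul_companion_eq_X_pow_add (p : ℕ) [ExpChar R p] {k d D : ℕ}
    (hw : ∀ a b, w (a + b) ≤ w a + w b) (hw_le : ∀ n, w n ≤ n) (hwq : w (p ^ k) ≤ p ^ k - D)
    (hd : d ≤ p ^ k) (c : R) {b : ℕ → R[X]}
    (hb : ∀ i ∈ Finset.Icc 1 d, b i ∈ weightLE R (w · + D) i) :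
    ∃ H ∈ biweightLE R w (p ^ k - D), (X + C (C c * X)) ^ (p ^ k - d) *
      (X ^ d + companionTail d (perturbedCoeff c d b)) = X ^ p ^ k + H := by
  have hw₀ : w 0 = 0 := Nat.le_zero.1 (hw_le 0)
  have hlin : (X + C (C c * X) : R[X][X]) ∈ biweightLE R w 1 := by
    rw [← pow_one (X : R[X])]
    exact add_mem (X_mem_biweightLE hw₀) (C_mem_biweightLE (C_mul_X_pow_mem_weightLE (hw_le 1) c))
  have hyq : (C (C c * X) ^ p ^ k : R[X][X]) ∈ biweightLE R w (p ^ k - D) := by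
    rw [← C_pow, mul_pow, ← C_pow]
    exact C_mem_biweightLE (C_mul_X_pow_mem_weightLE hwq _)
  have hrest : (X + C (C c * X)) ^ (p ^ k - d) * companionTail d b ∈
      biweightLE R w (p ^ k - D) := by
    have h := mul_mem_biweightLE (u := (w · + D))
      (fun x y => (Nat.add_le_add_right (hw x y) D).trans_eq (add_assoc _ _ _))
      (pow_mem_biweightLE hw hw₀ hlin (p ^ k - d)) (companionTail_mem_biweightLE hb)
    rw [mul_one, Nat.sub_add_cancel hd] at h
    exact biweightLE_mono (fun x y hxy => Nat.le_sub_of_add_le ((add_assoc x _ D).trans_le hxy)) h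
  refine ⟨_, add_mem hyq hrest, ?_⟩
  rw [X_pow_add_companionTail_perturbedCoeff, mul_add, ← pow_add, Nat.sub_add_cancel hd,
    add_pow_expChar_pow, add_assoc]

/-- The recurrence raised to the power `p ^ n` only involves the terms `s (m + a * p ^ n)`. -/
theorem apply_mem_weightLE_of_aeval_shift_eq_zero (p : ℕ) [ExpChar R p]
    (hw : ∀ a b, w (a + b) ≤ w a + w b) (hw_le : ∀ n, w n ≤ n) {n ρ : ℕ}
    (hρ : ∀ b, w (b * p ^ n) ≤ w b * ρ) {e N m E : ℕ} {K : R[X][X]} (hK : K ∈ biweightLE R w N)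
    (hKe : K.degree < e) {s : ℕ → R[X]} (hs : aeval (shift R[X]) (X ^ e + K) s = 0)
    (ih : ∀ l < m + e * p ^ n, s l ∈ weightLE R (w · + E) (w l)) :
    s (m + e * p ^ n) ∈ weightLE R (w · + E) (w m + N * ρ) := by
  have hp : 0 < p ^ n := pow_pos (expChar_pos R p) n
  have hrec : s (m + e * p ^ n) + ∑ a ∈ K.support, K.coeff a ^ p ^ n * s (m + a * p ^ n) = 0 := by
    have hpow : aeval (shift R[X]) ((X ^ e + K) ^ p ^ n) s = 0 := by
      rw [map_pow]
      exact Module.End.pow_map_zero_of_le hp (by rwa [pow_one])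
    rw [add_pow_expChar_pow, ← pow_mul, map_add, LinearMap.add_apply] at hpow
    simpa only [Pi.add_apply, Pi.zero_apply, aeval_shift_X_pow, aeval_shift_pow_expChar_pow]
      using congrFun hpow m
  rw [eq_neg_of_add_eq_zero_left hrec]
  refine neg_mem (sum_mem fun a ha => ?_)
  rw [mem_support_iff] at ha
  have haN : a ≤ N := mod_cast (le_degree_of_ne_zero ha).trans (degree_le_of_mem_biweightLE hK)
  have hae : a < e := mod_cast (le_degree_of_ne_zero ha).trans_lt hKe
  have hcoeff : K.coeff a ^ p ^ n ∈ weightLE R w ((N - a) * ρ) :=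
    pow_expChar_pow_mem_weightLE p
      (fun b hb => (hρ b).trans (Nat.mul_le_mul_right ρ (Nat.le_sub_of_add_le' hb)))
      (mem_biweightLE.1 hK a)
  have hterm : s (m + a * p ^ n) ∈ weightLE R (w · + E) (w m + a * ρ) :=
    weightLE_mono
      (fun b hb => hb.trans ((hw m _).trans (Nat.add_le_add_left
        ((hρ a).trans (Nat.mul_le_mul_right ρ (hw_le a))) _)))
      (ih _ (Nat.add_lt_add_left (Nat.mul_lt_mul_of_pos_right hae hp) m))
  have hbound : (N - a) * ρ + (w m + a * ρ) = w m + N * ρ := by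
    rw [add_left_comm, ← add_mul, Nat.sub_add_cancel haN]
  exact hbound ▸ mul_mem_weightLE
    (fun x y => (Nat.add_le_add_right (hw x y) E).trans_eq (add_assoc _ _ _)) hcoeff hterm

theorem apply_mem_weightLE_digitContent (p : ℕ) [ExpChar R p] {k q r d E : ℕ} (hqk : q = p ^ k)
    (hq : 1 < q) (hr : r < q) {K H : R[X][X]} {s : ℕ → R[X]}
    (hK : K ∈ biweightLE R (digitContent q r) d) (hKd : K.degree < d)
    (hKs : aeval (shift R[X]) (X ^ d + K) s = 0)
    (hH : H ∈ biweightLE R (digitContent q r) r) (hHs : aeval (shift R[X]) (X ^ q + H) s = 0)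
    (hinit : ∀ n < d, s n ∈ weightLE R (digitContent q r · + E) (digitContent q r n)) (n : ℕ) :
    s n ∈ weightLE R (digitContent q r · + E) (digitContent q r n) := by
  have hw := digitContent_add_le hq hr.le
  have hw_le := digitContent_le_self hq hr.le
  induction n using Nat.strong_induction_on with
  | _ n ih =>
  rcases lt_or_ge n d with hnd | hdn
  · exact hinit n hnd
  rcases lt_or_ge n q with hnq | hqn
  · obtain ⟨m, rfl⟩ := Nat.exists_eq_add_of_le' hdn
    have hstep := apply_mem_weightLE_of_aeval_shift_eq_zero p (n := 0) (ρ := 1) (m := m) (E := E)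
      hw hw_le (by simp) hK hKd hKs (by simpa using ih)
    simpa only [pow_zero, mul_one, digitContent_of_lt hnq,
      digitContent_of_lt ((Nat.le_add_right m d).trans_lt hnq)] using hstep
  · obtain ⟨j, hj⟩ := Nat.exists_eq_add_of_le' (Nat.log_pos hq hqn)
    have hjn : q ^ (j + 1) ≤ n := hj ▸ Nat.pow_log_le_self q (by omega)
    have hnj : n < q ^ (j + 1 + 1) := hj ▸ Nat.lt_pow_succ_log_self hq n
    obtain ⟨m, rfl⟩ := Nat.exists_eq_add_of_le' hjn
    have hqj : p ^ (k * j) = q ^ j := by rw [hqk, pow_mul]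
    have hHq : H.degree < q := (degree_le_of_mem_biweightLE hH).trans_lt (mod_cast hr)
    have hstep := apply_mem_weightLE_of_aeval_shift_eq_zero p (n := k * j) (ρ := r ^ j) (m := m)
      (E := E) hw hw_le (fun b => by rw [hqj, digitContent_mul_pow hq]) hH hHq hHs
      (by rwa [hqj, ← pow_succ'])
    rwa [hqj, ← pow_succ', ← pow_succ', ← digitContent_add_pow hq hnj] at hstep

lemma ite_mem_weightLE_of_degree_le {Q : ℕ → R[X]} (hw : ∀ n, w n ≤ n) {D i : ℕ}
    (hQ : D ≤ i → (Q i).degree ≤ ((i - D : ℕ) : WithBot ℕ)) :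
    (if D ≤ i then Q i else 0) ∈ weightLE R (w · + D) i := by
  split_ifs with h
  · refine mem_weightLE_of_degree_add_le hw ((add_le_add_left (hQ h) _).trans_eq ?_)
    exact_mod_cast Nat.sub_add_cancel h
  · exact zero_mem _

theorem apply_mem_weightLE_of_companion (p : ℕ) [ExpChar R p] {k q D d E : ℕ} (hqk : q = p ^ k)
    (hq : 1 < q) (hD : 0 < D) (hd : d ≤ q) {c : R} {b : ℕ → R[X]}
    (hb : ∀ i ∈ Finset.Icc 1 d, b i ∈ weightLE R (digitContent q (q - D) · + D) i) {s : ℕ → R[X]}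
    (hs : aeval (shift R[X]) (X ^ d + companionTail d (perturbedCoeff c d b)) s = 0)
    (hinit : ∀ n < d, (s n).degree + (E : WithBot ℕ) ≤ n) (n : ℕ) :
    s n ∈ weightLE R (digitContent q (q - D) · + E) (digitContent q (q - D) n) := by
  have hr : q - D < q := by omega
  have hw := digitContent_add_le hq hr.le
  have hw_le := digitContent_le_self hq hr.le
  have hwq : digitContent q (q - D) q = q - D := by
    simpa [digitContent_of_lt hq] using digitContent_mul_pow (r := q - D) hq 1 1
  obtain ⟨H, hH, hmul⟩ := exists_mul_companion_eq_X_pow_add p (k := k) hw hw_le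
    (by rw [← hqk, hwq]) (hqk ▸ hd) c hb
  rw [← hqk] at hH hmul
  have hHs : aeval (shift R[X]) (X ^ q + H) s = 0 := by
    rw [← hmul, map_mul, Module.End.mul_apply, hs, map_zero]
  refine apply_mem_weightLE_digitContent p hqk hq hr
    (companionTail_mem_biweightLE fun i hi => perturbedCoeff_mem_weightLE hw_le c d (hb i hi))
    (degree_companionTail_lt d _) hs hH hHs (fun m hm => ?_) n
  rw [digitContent_of_lt (hm.trans_le hd)]
  exact mem_weightLE_of_degree_add_le hw_le (hinit m hm)

end Descent

section NilpotenceIndex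

lemma map_mem_weightLE {R : Type*} [CommSemiring R] {w : ℕ → ℕ} {B E j : ℕ}
    {T : Module.End R R[X]} (hT : ∀ n, T (X ^ n) ∈ weightLE R (w · + E) (w n)) {f : R[X]}
    (hf : f ∈ weightLE R (w · + j) B) : T f ∈ weightLE R (w · + (j + E)) B := by
  rw [f.as_sum_support_C_mul_X_pow, map_sum]
  refine sum_mem fun n hn => ?_
  have hn' : w n + j ≤ B := mem_weightLE.1 hf n (mem_support_iff.1 hn)
  rw [← smul_eq_C_mul, map_smul]
  exact Submodule.smul_mem _ _ (weightLE_mono (fun m hm => by omega) (hT n))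

lemma pow_apply_mem_weightLE {R : Type*} [CommSemiring R] {w : ℕ → ℕ} {B E : ℕ}
    {T : Module.End R R[X]} (hT : ∀ n, T (X ^ n) ∈ weightLE R (w · + E) (w n)) {f : R[X]}
    (hf : f ∈ weightLE R w B) (n : ℕ) : (T ^ n) f ∈ weightLE R (w · + n * E) B := by
  induction n with
  | zero => simpa using hf
  | succ n ih =>
    rw [pow_succ', Module.End.mul_apply, add_one_mul]
    exact map_mem_weightLE hT ih

lemma nilpIndex_le_div {R : Type} [CommRing R] {w : ℕ → ℕ} {B E : ℕ} (hE : 0 < E)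
    {T : Module.End R R[X]} (hT : ∀ n, T (X ^ n) ∈ weightLE R (w · + E) (w n)) {f : R[X]}
    (hf₀ : f ≠ 0) (hf : f ∈ weightLE R w B) : nilpIndex T f ≤ B / E :=
  csSup_le ⟨0, hf₀⟩ fun n hn => (Nat.le_div_iff_mul_le hE).2 <|
    (Nat.le_add_left _ _).trans
      (mem_weightLE.1 (pow_apply_mem_weightLE hT hf n) _ (leadingCoeff_ne_zero.2 hn))

lemma mem_weightLE_digitContent {R : Type*} [Semiring R] {q r : ℕ} (hq : 1 < q) (hr : 1 < r)
    (f : R[X]) : f ∈ weightLE R (digitContent q r) ⌊(r : ℝ) * ((q - 1 : ℕ) : ℝ) /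
      ((r - 1 : ℕ) : ℝ) * (f.natDegree : ℝ) ^ (Real.log r / Real.log q)⌋₊ := by
  refine mem_weightLE.2 fun n hn => Nat.le_floor ((digitContent_le_rpow hq hr n).trans ?_)
  have hexp : 0 ≤ Real.log r / Real.log q :=
    div_nonneg (Real.log_natCast_nonneg r) (Real.log_natCast_nonneg q)
  have hnf : n ≤ f.natDegree := le_natDegree_of_ne_zero hn
  exact mul_le_mul_of_nonneg_left
    (Real.rpow_le_rpow (Nat.cast_nonneg n) (Nat.cast_le.2 hnf) hexp) (by positivity)

end NilpotenceIndex

theorem stmt4_general {R : Type} [CommRing R] (p : ℕ) [ExpChar R p] (k q : ℕ) (hq : q = p ^ k)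
    (E D d : ℕ) (hE : 1 ≤ E) (hD1 : 1 ≤ D) (hDq : D ≤ q - 2) (hdq : d ≤ q) (T : Module.End R R[X])
    (hinit : ∀ n < d, (T (X ^ n)).degree + (E : WithBot ℕ) ≤ n) (c : R) (Q : ℕ → R[X])
    (hQdeg : ∀ i, D ≤ i → i ≤ d → (Q i).degree ≤ ((i - D : ℕ) : WithBot ℕ))
    (hrec : ∀ n, d ≤ n → T (X ^ n) = -∑ i ∈ Finset.Icc 1 d,
      (C ((d.choose i : R) * c ^ i) * X ^ i + if D ≤ i then Q i else 0) * T (X ^ (n - i)))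
    (f : R[X]) (hf : f ≠ 0) :
    (nilpIndex T f : ℝ) ≤
      (((q - D : ℕ) : ℝ) * ((q - 1 : ℕ) : ℝ)) / ((E : ℝ) * ((q - D - 1 : ℕ) : ℝ)) *
        (f.natDegree : ℝ) ^ (Real.log ((q - D : ℕ) : ℝ) / Real.log (q : ℝ)) := by
  have hq1 : 1 < q := by omega
  have hT := apply_mem_weightLE_of_companion p hq hq1 hD1 hdq
    (fun i hi => ite_mem_weightLE_of_degree_le (digitContent_le_self hq1 (Nat.sub_le q D))
      fun h => hQdeg i h (Finset.mem_Icc.1 hi).2)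
    (aeval_shift_companion_eq_zero (s := fun n => T (X ^ n)) hrec) hinit
  have hN := nilpIndex_le_div hE hT hf (mem_weightLE_digitContent hq1 (by omega) f)
  calc (nilpIndex T f : ℝ) ≤ ((_ / E : ℕ) : ℝ) := Nat.cast_le.2 hN
    _ ≤ (⌊_⌋₊ : ℝ) / E := Nat.cast_div_le
    _ ≤ (((q - D : ℕ) : ℝ) * ((q - 1 : ℕ) : ℝ) / ((q - D - 1 : ℕ) : ℝ) * (f.natDegree : ℝ) ^
          (Real.log ((q - D : ℕ) : ℝ) / Real.log (q : ℝ))) / E := by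
        gcongr
        exact Nat.floor_le (by positivity)
    _ = _ := by rw [mul_comm (E : ℝ), ← div_div, mul_div_right_comm]

/-- **Refined toy Nilpotence Growth Theorem.** -/
theorem stmt4 {F : Type} [Field F] (p : ℕ) (hp : p.Prime) [CharP F p]
    (k q : ℕ) (hq : q = p ^ k)
    (E D d : ℕ) (hE : 1 ≤ E) (hD1 : 1 ≤ D) (hDq : D ≤ q - 2) (hd1 : 1 ≤ d) (hdq : d ≤ q)
    (T : Module.End F (Polynomial F))
    -- (1) `deg T(f) ≤ deg f − E` for nonzero `f`:
    (hdeglow : ∀ f : Polynomial F, f ≠ 0 → (T f).degree + (E : WithBot ℕ) ≤ f.degree)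
    (c : F) (Q : ℕ → Polynomial F)
    (hQdeg : ∀ i, D ≤ i → i ≤ d → (Q i).degree ≤ ((i - D : ℕ) : WithBot ℕ))
    -- recurrence with companion polynomial `(X + c·y)^d + Σ_{i=D}^d Q_i(y)·X^{d−i}`:
    (hrec : ∀ n, d ≤ n →
      T ((X : Polynomial F) ^ n) =
        -∑ i ∈ Finset.Icc 1 d,
          (C ((d.choose i : F) * c ^ i) * X ^ i + if D ≤ i then Q i else 0) *
            T (X ^ (n - i))) :
    ∀ f : Polynomial F, (1 : WithBot ℕ) ≤ f.degree →
      (nilpIndex T f : ℝ) ≤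
        (((q - D : ℕ) : ℝ) * ((q - 1 : ℕ) : ℝ)) / ((E : ℝ) * ((q - D - 1 : ℕ) : ℝ)) *
          (f.natDegree : ℝ) ^ (Real.log ((q - D : ℕ) : ℝ) / Real.log (q : ℝ)) := by
  have := ExpChar.prime (R := F) hp
  refine fun f hf => stmt4_general p k q hq E D d hE hD1 hDq hdq T (fun n _ => ?_) c Q hQdeg hrec
    f ?_
  · simpa only [degree_X_pow] using hdeglow (X ^ n) (monic_X_pow n).ne_zero
  · rintro rfl
    simp at hf
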